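/- arXiv:2501.15312 — 4 statements merged into one kernel-verified Lean document; each statement's English description precedes it below -/
import Mathlib

section
/- For every ε > 0, the probability that the Erdős–Rényi random graph G(n,1/2) contains a clique on at least (2+ε)·log₂ n vertices tends to 0 as n → ∞. -/
open MeasureTheory Filter Topology

open scoped Classical in
/-- The uniform probability measure on a finite type: normalized counting measure. -/
noncomputable def uniformMeasure (α : Type*) [Fintype α] [MeasurableSpace α] :
    Measure α :=
  (Fintype.card α : ENNReal)⁻¹ • Measure.count

/-- `ω : Sym2 (Fin n) → Bool` encodes the edge indicators of a graph on vertex set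
`{0,…,n-1}`; a finite vertex set `S` is a clique if every pair of distinct
vertices of `S` forms an edge. -/
def IsClique (n : ℕ) (ω : Sym2 (Fin n) → Bool) (S : Finset (Fin n)) : Prop :=
  ∀ i ∈ S, ∀ j ∈ S, i ≠ j → ω s(i, j) = true

/-!
First moment method. The edges inside a fixed set of `k` vertices are `k.choose 2` independent fair
coins, so the expected number of `k`-cliques is `n.choose k * 2⁻¹ ^ k.choose 2`, which is at most
`(n * 2 ^ (-(k - 1) / 2)) ^ k`. For `k ≥ (2 + ε) * logb 2 n` the base of this power is at most
`√2 * n ^ (-ε / 2)`, which tends to `0`; and a graph with a clique on at least `k` vertices has one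
on exactly `k` vertices.
-/

section UniformMeasure

open ProbabilityTheory

variable {Ω : Type*} [Fintype Ω] [MeasurableSpace Ω]

lemma uniformMeasure_eq_uniformOn_univ : uniformMeasure Ω = uniformOn Set.univ := by
  ext s
  rw [uniformOn_univ, uniformMeasure, Measure.smul_apply, smul_eq_mul, ENNReal.div_eq_inv_mul]

instance [Nonempty Ω] : IsProbabilityMeasure (uniformMeasure Ω) := by
  rw [uniformMeasure_eq_uniformOn_univ]
  infer_instance

variable [MeasurableSingletonClass Ω]

lemma uniformMeasure_singleton (x : Ω) : uniformMeasure Ω {x} = (Fintype.card Ω : ENNReal)⁻¹ := by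
  rw [uniformMeasure, Measure.smul_apply, Measure.count_singleton, smul_eq_mul, mul_one]

variable {ι : Type*} [Fintype ι] [DecidableEq ι]

lemma uniformMeasure_fun : uniformMeasure (ι → Ω) = Measure.pi fun _ ↦ uniformMeasure Ω := by
  simp only [uniformMeasure_eq_uniformOn_univ]
  rw [← uniformOn_pi, Set.pi_univ]

lemma uniformMeasure_pi_finset [Nonempty Ω] (s : Finset ι) (t : ι → Set Ω) :
    uniformMeasure (ι → Ω) ((s : Set ι).pi t) = ∏ i ∈ s, uniformMeasure Ω (t i) := by
  rw [uniformMeasure_fun, Measure.pi_pi_finset]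

end UniformMeasure

section Clique

variable {n : ℕ}

lemma IsClique.subset {ω : Sym2 (Fin n) → Bool} {S T : Finset (Fin n)} (hT : IsClique n ω T)
    (hST : S ⊆ T) : IsClique n ω S :=
  fun i hi j hj ↦ hT i (hST hi) j (hST hj)

lemma setOf_isClique_eq_pi (S : Finset (Fin n)) :
    {ω | IsClique n ω S} =
      (S.offDiag.image Sym2.mk.uncurry : Set (Sym2 (Fin n))).pi fun _ ↦ {true} := by
  ext ω
  simp only [IsClique, Set.mem_ofPred_eq, Set.mem_pi, Finset.coe_image, Set.forall_mem_image,
    Prod.forall, Finset.mem_coe, Finset.mem_offDiag, Function.uncurry_apply_pair,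
    Set.mem_singleton_iff]
  grind

lemma uniformMeasure_isClique (S : Finset (Fin n)) :
    uniformMeasure (Sym2 (Fin n) → Bool) {ω | IsClique n ω S} = 2⁻¹ ^ S.card.choose 2 := by
  rw [setOf_isClique_eq_pi, uniformMeasure_pi_finset, Finset.prod_const, Sym2.card_image_offDiag,
    uniformMeasure_singleton, Fintype.card_bool, Nat.cast_ofNat]

lemma uniformMeasure_exists_isClique_le (n k : ℕ) :
    uniformMeasure (Sym2 (Fin n) → Bool) {ω | ∃ S : Finset (Fin n), k ≤ S.card ∧ IsClique n ω S} ≤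
      n.choose k * 2⁻¹ ^ k.choose 2 := by
  have hsub : {ω | ∃ S : Finset (Fin n), k ≤ S.card ∧ IsClique n ω S} ⊆
      ⋃ S ∈ Finset.univ.powersetCard k, {ω | IsClique n ω S} := by
    rintro ω ⟨S, hkS, hS⟩
    obtain ⟨T, hTS, hT⟩ := Finset.exists_subset_card_eq hkS
    exact Set.mem_biUnion (Finset.mem_powersetCard_univ.2 hT) (hS.subset hTS)
  calc
    _ ≤ ∑ S ∈ Finset.univ.powersetCard k,
          uniformMeasure (Sym2 (Fin n) → Bool) {ω | IsClique n ω S} :=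
      (measure_mono hsub).trans (measure_biUnion_finset_le _ _)
    _ = ∑ S ∈ (Finset.univ : Finset (Fin n)).powersetCard k, 2⁻¹ ^ k.choose 2 :=
      Finset.sum_congr rfl fun S hS ↦ by
        rw [uniformMeasure_isClique, Finset.mem_powersetCard_univ.1 hS]
    _ = n.choose k * 2⁻¹ ^ k.choose 2 := by
      rw [Finset.sum_const, Finset.card_powersetCard, Finset.card_fin, nsmul_eq_mul]

end Clique

section Estimates

lemma inv_two_pow_choose_two (k : ℕ) :
    (2⁻¹ : ℝ) ^ k.choose 2 = (2 ^ (-((k - 1 : ℝ) / 2))) ^ k := by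
  rw [← Real.rpow_natCast, ← Real.rpow_natCast, ← Real.rpow_mul zero_le_two,
    Real.inv_rpow zero_le_two, ← Real.rpow_neg zero_le_two, Nat.cast_choose_two]
  congr 1
  ring

lemma choose_mul_inv_two_pow_choose_two_le (n k : ℕ) :
    n.choose k * (2⁻¹ : ℝ) ^ k.choose 2 ≤ ((n : ℝ) * 2 ^ (-((k - 1 : ℝ) / 2))) ^ k := by
  rw [inv_two_pow_choose_two, mul_pow]
  gcongr
  exact_mod_cast Nat.choose_le_pow n k

lemma mul_two_rpow_le_of_logb_le {ε x y : ℝ} (hx : 0 < x) (hy : (2 + ε) * Real.logb 2 x ≤ y) :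
    x * 2 ^ (-((y - 1) / 2)) ≤ √2 * x ^ (-(ε / 2)) := by
  have hx_eq : (2 : ℝ) ^ Real.logb 2 x = x := Real.rpow_logb two_pos (by norm_num) hx
  calc
    x * 2 ^ (-((y - 1) / 2)) = 2 ^ (Real.logb 2 x - (y - 1) / 2) := by
      rw [sub_eq_add_neg _ ((y - 1) / 2), Real.rpow_add two_pos, hx_eq]
    _ ≤ 2 ^ (1 / 2 + Real.logb 2 x * -(ε / 2)) := by
      gcongr
      · exact one_le_two
      · linarith
    _ = √2 * x ^ (-(ε / 2)) := by
      rw [Real.rpow_add two_pos, Real.rpow_mul zero_le_two, hx_eq, Real.sqrt_eq_rpow]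

end Estimates

lemma uniformMeasure_exists_isClique_le_rpow {ε : ℝ} (hε : 0 < ε) {n : ℕ} (hn : 1 < n) :
    uniformMeasure (Sym2 (Fin n) → Bool)
        {ω | ∃ S : Finset (Fin n),
          (2 + ε) * Real.logb 2 n ≤ (S.card : ℝ) ∧ IsClique n ω S} ≤
      ENNReal.ofReal (√2 * (n : ℝ) ^ (-(ε / 2))) := by
  set r : ℝ := √2 * (n : ℝ) ^ (-(ε / 2))
  obtain hr | hr := le_total 1 r
  · exact prob_le_one.trans (ENNReal.one_le_ofReal.2 hr)
  set k : ℕ := ⌈(2 + ε) * Real.logb 2 n⌉₊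
  have hlog : 0 < Real.logb 2 n := Real.logb_pos one_lt_two (by exact_mod_cast hn)
  have hk : k ≠ 0 := (Nat.ceil_pos.2 (by positivity)).ne'
  have hbase : (n : ℝ) * 2 ^ (-((k - 1 : ℝ) / 2)) ≤ r :=
    mul_two_rpow_le_of_logb_le (by positivity) (Nat.le_ceil _)
  have hmoment : n.choose k * (2⁻¹ : ℝ) ^ k.choose 2 ≤ r :=
    calc
      _ ≤ ((n : ℝ) * 2 ^ (-((k - 1 : ℝ) / 2))) ^ k := choose_mul_inv_two_pow_choose_two_le n k
      _ ≤ r ^ k := by gcongr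
      _ ≤ r := pow_le_of_le_one (by positivity) hr hk
  simp only [← Nat.ceil_le]
  calc
    _ ≤ (n.choose k * 2⁻¹ ^ k.choose 2 : ENNReal) := uniformMeasure_exists_isClique_le n k
    _ = ENNReal.ofReal (n.choose k * 2⁻¹ ^ k.choose 2) := by
      rw [ENNReal.ofReal_mul (by positivity), ENNReal.ofReal_natCast,
        ENNReal.ofReal_pow (by positivity), ENNReal.ofReal_inv_of_pos two_pos,
        ENNReal.ofReal_ofNat]
    _ ≤ ENNReal.ofReal r := ENNReal.ofReal_le_ofReal hmoment

lemma tendsto_ofReal_const_mul_rpow_neg (c : ℝ) {δ : ℝ} (hδ : 0 < δ) :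
    Tendsto (fun n : ℕ ↦ ENNReal.ofReal (c * (n : ℝ) ^ (-δ))) atTop (𝓝 0) := by
  have hpow : Tendsto (fun n : ℕ ↦ (n : ℝ) ^ (-δ)) atTop (𝓝 0) :=
    (tendsto_rpow_neg_atTop hδ).comp tendsto_natCast_atTop_atTop
  simpa using ENNReal.tendsto_ofReal (hpow.const_mul c)

/-- for every `ε > 0`, whp the Erdős–Rényi graph `G(n,1/2)` (uniform
measure over all graphs on `n` vertices) contains no clique on at least
`(2+ε)·log₂ n` vertices. -/
theorem clique_number_upper_bound (ε : ℝ) (hε : 0 < ε) :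
    Tendsto
      (fun n : ℕ =>
        uniformMeasure (Sym2 (Fin n) → Bool)
          {ω | ∃ S : Finset (Fin n),
            (2 + ε) * Real.logb 2 n ≤ (S.card : ℝ) ∧ IsClique n ω S})
      atTop (𝓝 0) := by
  have hbound : Tendsto (fun n : ℕ ↦ ENNReal.ofReal (√2 * (n : ℝ) ^ (-(ε / 2)))) atTop (𝓝 0) :=
    tendsto_ofReal_const_mul_rpow_neg √2 (half_pos hε)
  refine tendsto_of_tendsto_of_tendsto_of_le_of_le' tendsto_const_nhds hbound
    (Eventually.of_forall fun _ ↦ zero_le) ?_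
  filter_upwards [eventually_gt_atTop 1] with n hn
  exact uniformMeasure_exists_isClique_le_rpow hε hn
end

section
/- For every ε with 0 < ε < 2, the probability that the Erdős–Rényi random graph G(n,1/2) contains a clique on at least (2−ε)·log₂ n vertices tends to 1 as n → ∞. (Combined with the matching upper bound, the clique number of G(n,1/2) equals 2(1+o(1))·log₂ n whp.) -/
open MeasureTheory Filter Topology

/-!
The proof is the second moment method. Let `k = ⌈(2 - ε) log₂ n⌉` and let `X` count the `k`-cliques.
For two `k`-sets `S`, `T` the events that they span cliques have covariance
`4 ^ (-k.choose 2) * (2 ^ (#(S ∩ T)).choose 2 - 1)`, which vanishes unless `S` and `T` share a pair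
of vertices. At most a fraction `(k.choose j) ^ 2 / n.choose j` of the `k`-sets `T` meet `S` in
exactly `j` vertices, so Chebyshev's inequality gives
`P (X = 0) ≤ ∑ j ∈ [2, k], 2 ^ j.choose 2 * (k.choose j) ^ 2 / n.choose j`.
Since `k.choose j / n.choose j ≤ (k / n) ^ j` and `j.choose 2 ≤ k * j / 2`, the `j`-th summand is at
most `(k ^ 4 * 2 ^ k / n ^ 2) ^ (j / 2)`, where `2 ^ k` has order `n ^ (2 - ε)`, so that the base is
of order `k ^ 4 * n ^ (-ε)` and the sum tends to `0`.
-/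

open Asymptotics Finset ProbabilityTheory

section SecondMoment

variable {Ω : Type*} [MeasurableSpace Ω] {μ : Measure Ω}

lemma memLp_indicator_one [IsFiniteMeasure μ] {A : Set Ω} (hA : MeasurableSet A) (p : ENNReal) :
    MemLp (A.indicator (1 : Ω → ℝ)) p μ :=
  memLp_indicator_const p hA 1 (.inr (measure_ne_top μ A))

lemma measureReal_setOf_eq_zero_le_variance_div_sq [IsFiniteMeasure μ] {X : Ω → ℝ}
    (hX : MemLp X 2 μ) (hμX : μ[X] ≠ 0) : μ.real {ω | X ω = 0} ≤ Var[X; μ] / μ[X] ^ 2 := by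
  have hsubset : {ω | X ω = 0} ⊆ {ω | |μ[X]| ≤ |X ω - μ[X]|} := fun ω hω => by
    rw [Set.mem_ofPred_eq] at hω ⊢
    rw [hω, zero_sub, abs_neg]
  have hchebyshev := (measure_mono hsubset).trans
    (meas_ge_le_variance_div_sq hX (abs_pos.2 hμX))
  rw [sq_abs] at hchebyshev
  exact ENNReal.toReal_le_of_le_ofReal (div_nonneg (variance_nonneg X μ) (sq_nonneg _)) hchebyshev

variable [IsProbabilityMeasure μ]

lemma covariance_indicator_one {A B : Set Ω} (hA : MeasurableSet A) (hB : MeasurableSet B) :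
    cov[A.indicator 1, B.indicator 1; μ] = μ.real (A ∩ B) - μ.real A * μ.real B := by
  rw [covariance_eq_sub (memLp_indicator_one hA 2) (memLp_indicator_one hB 2),
    ← Set.inter_indicator_one, integral_indicator_one (hA.inter hB), integral_indicator_one hA,
    integral_indicator_one hB]

lemma measureReal_forall_notMem_le {ι : Type*} {s : Finset ι} {A : ι → Set Ω}
    (hA : ∀ i ∈ s, MeasurableSet (A i)) (hpos : 0 < ∑ i ∈ s, μ.real (A i)) :
    μ.real {ω | ∀ i ∈ s, ω ∉ A i} ≤
      (∑ i ∈ s, ∑ j ∈ s, (μ.real (A i ∩ A j) - μ.real (A i) * μ.real (A j))) /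
        (∑ i ∈ s, μ.real (A i)) ^ 2 := by
  set X : Ω → ℝ := fun ω => ∑ i ∈ s, (A i).indicator 1 ω
  have hmemLp : ∀ i ∈ s, MemLp ((A i).indicator (1 : Ω → ℝ)) 2 μ := fun i hi =>
    memLp_indicator_one (hA i hi) 2
  have hmean : μ[X] = ∑ i ∈ s, μ.real (A i) := by
    rw [integral_finsetSum s fun i hi => (hmemLp i hi).integrable one_le_two]
    exact sum_congr rfl fun i hi => integral_indicator_one (hA i hi)
  have hvar : Var[X; μ] =
      ∑ i ∈ s, ∑ j ∈ s, (μ.real (A i ∩ A j) - μ.real (A i) * μ.real (A j)) := by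
    rw [variance_fun_sum' hmemLp]
    exact sum_congr rfl fun i hi => sum_congr rfl fun j hj =>
      covariance_indicator_one (hA i hi) (hA j hj)
  have hsubset : {ω | ∀ i ∈ s, ω ∉ A i} ⊆ {ω | X ω = 0} := fun ω hω =>
    sum_eq_zero fun i hi => Set.indicator_of_notMem (hω i hi) _
  calc μ.real {ω | ∀ i ∈ s, ω ∉ A i} ≤ μ.real {ω | X ω = 0} := measureReal_mono hsubset
    _ ≤ Var[X; μ] / μ[X] ^ 2 := measureReal_setOf_eq_zero_le_variance_div_sq
      (memLp_finsetSum s hmemLp) (hmean ▸ hpos.ne')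
    _ = _ := by rw [hvar, hmean]

end SecondMoment

lemma tendsto_measure_compl_nhds_one {ι : Type*} {l : Filter ι} {Ω : ι → Type*}
    [∀ i, MeasurableSpace (Ω i)] {μ : ∀ i, Measure (Ω i)} [∀ i, IsProbabilityMeasure (μ i)]
    {A : ∀ i, Set (Ω i)} (hA : ∀ i, MeasurableSet (A i))
    (h : Tendsto (fun i => (μ i).real (A i)) l (𝓝 0)) :
    Tendsto (fun i => μ i (A i)ᶜ) l (𝓝 1) := by
  have hsub := ENNReal.tendsto_ofReal (h.const_sub 1)
  rw [sub_zero, ENNReal.ofReal_one] at hsub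
  refine hsub.congr fun i => ?_
  rw [← probReal_compl_eq_one_sub (hA i), ofReal_measureReal]

lemma uniformMeasure_eq_uniformOn (α : Type*) [Fintype α] [MeasurableSpace α] :
    uniformMeasure α = uniformOn Set.univ := by
  simp [uniformMeasure, uniformOn, ProbabilityTheory.cond]

instance isProbabilityMeasure_uniformMeasure (α : Type*) [Fintype α] [Nonempty α]
    [MeasurableSpace α] : IsProbabilityMeasure (uniformMeasure α) := by
  rw [uniformMeasure_eq_uniformOn]
  infer_instance

lemma measureReal_uniformMeasure_forall_eq_true {α : Type*} [Fintype α] [DecidableEq α]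
    (E : Finset α) :
    (uniformMeasure (α → Bool)).real {ω | ∀ e ∈ E, ω e = true} = (1 / 2) ^ #E := by
  have hpi : {ω : α → Bool | ∀ e ∈ E, ω e = true} =
      Set.univ.pi fun e => if e ∈ E then {true} else Set.univ := by
    ext ω
    simp only [Set.mem_ofPred_eq, Set.mem_univ_pi]
    exact forall_congr' fun e => by split_ifs <;> simp_all
  have hcoord (e : α) : (uniformOn (Set.univ : Set Bool)).real
      (if e ∈ E then {true} else Set.univ) = if e ∈ E then 1 / 2 else 1 := by
    split_ifs
    · rw [measureReal_def, uniformOn_univ, Measure.count_singleton, Fintype.card_bool]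
      simp
    · exact probReal_univ
  rw [uniformMeasure_eq_uniformOn, ← Set.pi_univ Set.univ, uniformOn_pi, hpi, Measure.real,
    Measure.pi_pi, ENNReal.toReal_prod]
  simp_rw [← Measure.real_def, hcoord]
  rw [prod_ite_mem, univ_inter, prod_const]

section Clique

/-- The edges of the complete graph on a finite vertex set `S`. The loops `s(v, v)`, which `Sym2 V`
contains, are left out: whether `S` is a clique does not depend on them. -/
def innerEdges {V : Type*} [DecidableEq V] (S : Finset V) : Finset (Sym2 V) :=
  {e ∈ S.sym2 | ¬e.IsDiag}

lemma mk_mem_innerEdges {V : Type*} [DecidableEq V] {S : Finset V} {v w : V} :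
    s(v, w) ∈ innerEdges S ↔ (v ∈ S ∧ w ∈ S) ∧ v ≠ w := by
  rw [innerEdges, mem_filter, mk_mem_sym2_iff, Sym2.mk_isDiag_iff]

lemma card_innerEdges {V : Type*} [DecidableEq V] (S : Finset V) :
    #(innerEdges S) = (#S).choose 2 := by
  rw [innerEdges, sym2_eq_image, Sym2.filter_image_mk_not_isDiag, Sym2.card_image_offDiag]

lemma innerEdges_inter {V : Type*} [DecidableEq V] (S T : Finset V) :
    innerEdges (S ∩ T) = innerEdges S ∩ innerEdges T := by
  ext e
  induction e using Sym2.ind with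
  | _ v w =>
    simp only [mk_mem_innerEdges, mem_inter]
    tauto

variable {n : ℕ}

lemma isClique_iff_forall_innerEdges {ω : Sym2 (Fin n) → Bool} {S : Finset (Fin n)} :
    IsClique n ω S ↔ ∀ e ∈ innerEdges S, ω e = true := by
  simp only [IsClique, Sym2.forall, mk_mem_innerEdges]
  exact ⟨fun h v w ⟨⟨hv, hw⟩, hvw⟩ => h v hv w hw hvw,
    fun h v hv w hw hvw => h v w ⟨⟨hv, hw⟩, hvw⟩⟩

lemma measureReal_isClique (S : Finset (Fin n)) :
    (uniformMeasure (Sym2 (Fin n) → Bool)).real {ω | IsClique n ω S} =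
      (1 / 2) ^ (#S).choose 2 := by
  simp_rw [isClique_iff_forall_innerEdges]
  rw [measureReal_uniformMeasure_forall_eq_true, card_innerEdges]

lemma measureReal_isClique_inter (S T : Finset (Fin n)) :
    (uniformMeasure (Sym2 (Fin n) → Bool)).real
        ({ω | IsClique n ω S} ∩ {ω | IsClique n ω T}) =
      (1 / 2) ^ (#S).choose 2 * (1 / 2) ^ (#T).choose 2 * 2 ^ (#(S ∩ T)).choose 2 := by
  have hunion : {ω | IsClique n ω S} ∩ {ω | IsClique n ω T} =
      {ω | ∀ e ∈ innerEdges S ∪ innerEdges T, ω e = true} := by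
    ext ω
    simp only [Set.mem_inter_iff, Set.mem_ofPred_eq, isClique_iff_forall_innerEdges, mem_union,
      or_imp, forall_and]
  have hcard := card_union_add_card_inter (innerEdges S) (innerEdges T)
  rw [← innerEdges_inter] at hcard
  simp only [card_innerEdges] at hcard
  rw [hunion, measureReal_uniformMeasure_forall_eq_true, ← pow_add, ← hcard, pow_add, mul_assoc,
    ← mul_pow]
  norm_num

lemma measureReal_forall_not_isClique_le_sum {k : ℕ} (hkn : k ≤ n) :
    (uniformMeasure (Sym2 (Fin n) → Bool)).real
        {ω | ∀ S : Finset (Fin n), #S = k → ¬IsClique n ω S} ≤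
      (∑ S ∈ powersetCard k (univ : Finset (Fin n)), ∑ T ∈ powersetCard k univ,
        ((2 : ℝ) ^ (#(S ∩ T)).choose 2 - 1)) / (n.choose k : ℝ) ^ 2 := by
  set μ := uniformMeasure (Sym2 (Fin n) → Bool)
  set p : ℝ := (1 / 2) ^ k.choose 2
  have hp : 0 < p := by positivity
  have hprob : ∀ S ∈ powersetCard k (univ : Finset (Fin n)), μ.real {ω | IsClique n ω S} = p :=
    fun S hS => by rw [measureReal_isClique, (mem_powersetCard.1 hS).2]
  have hmean : ∑ S ∈ powersetCard k (univ : Finset (Fin n)), μ.real {ω | IsClique n ω S} =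
      n.choose k * p := by
    rw [sum_congr rfl hprob, sum_const, card_powersetCard, card_univ, Fintype.card_fin,
      nsmul_eq_mul]
  have hcov : ∀ S ∈ powersetCard k (univ : Finset (Fin n)), ∀ T ∈ powersetCard k univ,
      μ.real ({ω | IsClique n ω S} ∩ {ω | IsClique n ω T}) -
        μ.real {ω | IsClique n ω S} * μ.real {ω | IsClique n ω T} =
      p ^ 2 * ((2 : ℝ) ^ (#(S ∩ T)).choose 2 - 1) := fun S hS T hT => by
    rw [hprob S hS, hprob T hT, measureReal_isClique_inter, (mem_powersetCard.1 hS).2,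
      (mem_powersetCard.1 hT).2]
    ring
  have hsecond := measureReal_forall_notMem_le (μ := μ)
    (s := powersetCard k (univ : Finset (Fin n))) (A := fun S => {ω | IsClique n ω S})
    (fun _ _ => .of_discrete)
    (hmean ▸ mul_pos (Nat.cast_pos.2 (Nat.choose_pos hkn)) hp)
  rw [hmean, sum_congr rfl fun S hS => sum_congr rfl (hcov S hS)] at hsecond
  simp only [← mul_sum, mem_powersetCard_univ, Set.mem_ofPred_eq] at hsecond
  rwa [mul_pow, mul_comm (_ ^ 2) (p ^ 2), mul_div_mul_left _ _ (pow_pos hp 2).ne'] at hsecond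

end Clique

section Overlaps

variable {V : Type*} [DecidableEq V] {S U : Finset V} {j k : ℕ}

lemma card_filter_card_inter_eq_mul_choose_le (hSU : S ⊆ U) (hjk : j ≤ k) :
    #{T ∈ powersetCard k U | #(S ∩ T) = j} * (#U).choose j ≤
      (#S).choose j * k.choose j * (#U).choose k := by
  have hcover : {T ∈ powersetCard k U | #(S ∩ T) = j} ⊆
      (powersetCard j S).biUnion fun A => {T ∈ powersetCard k U | A ⊆ T} := fun T hT => by
    obtain ⟨hTU, hinter⟩ := mem_filter.1 hT
    exact mem_biUnion.2 ⟨S ∩ T, mem_powersetCard.2 ⟨inter_subset_left, hinter⟩,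
      mem_filter.2 ⟨hTU, inter_subset_right⟩⟩
  have hsupersets : ∀ A ∈ powersetCard j S,
      #{T ∈ powersetCard k U | A ⊆ T} ≤ (#U - j).choose (k - j) := fun A hA => by
    obtain ⟨hAS, rfl⟩ := mem_powersetCard.1 hA
    exact (card_filter_powersetCard_subset A U k (hAS.trans hSU) hjk).le
  calc #{T ∈ powersetCard k U | #(S ∩ T) = j} * (#U).choose j
      ≤ (#S).choose j * (#U - j).choose (k - j) * (#U).choose j := by
        gcongr
        exact (card_le_card hcover).trans
          ((card_biUnion_le_card_mul _ _ _ hsupersets).trans_eq (by rw [card_powersetCard]))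
    _ = (#S).choose j * ((#U).choose j * (#U - j).choose (k - j)) := by ring
    _ = (#S).choose j * k.choose j * (#U).choose k := by rw [← Nat.choose_mul hjk]; ring

lemma card_filter_card_inter_eq_le_div (hSU : S ⊆ U) (hjk : j ≤ k) (hkU : k ≤ #U) :
    (#{T ∈ powersetCard k U | #(S ∩ T) = j} : ℝ) ≤
      (#S).choose j * k.choose j * (#U).choose k / (#U).choose j := by
  rw [le_div_iff₀ (Nat.cast_pos.2 (Nat.choose_pos (hjk.trans hkU)))]
  exact_mod_cast card_filter_card_inter_eq_mul_choose_le hSU hjk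

lemma sum_two_pow_choose_card_inter_sub_one_le (hSU : S ⊆ U) (hkU : k ≤ #U) :
    ∑ T ∈ powersetCard k U, ((2 : ℝ) ^ (#(S ∩ T)).choose 2 - 1) ≤
      (#U).choose k * ∑ j ∈ Icc 2 k,
        (2 : ℝ) ^ j.choose 2 * ((#S).choose j * k.choose j) / (#U).choose j := by
  have hsplit : ∀ T ∈ powersetCard k U, (2 : ℝ) ^ (#(S ∩ T)).choose 2 - 1 ≤
      ∑ j ∈ Icc 2 k, if #(S ∩ T) = j then (2 : ℝ) ^ j.choose 2 else 0 := fun T hT => by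
    rw [sum_ite_eq]
    split_ifs with hmem
    · exact sub_le_self _ zero_le_one
    · have hle : #(S ∩ T) ≤ k :=
        (card_le_card inter_subset_right).trans_eq (mem_powersetCard.1 hT).2
      have hlt : #(S ∩ T) < 2 := by
        rw [mem_Icc] at hmem
        lia
      rw [Nat.choose_eq_zero_of_lt hlt, pow_zero, sub_self]
  calc ∑ T ∈ powersetCard k U, ((2 : ℝ) ^ (#(S ∩ T)).choose 2 - 1)
      ≤ ∑ T ∈ powersetCard k U, ∑ j ∈ Icc 2 k,
          if #(S ∩ T) = j then (2 : ℝ) ^ j.choose 2 else 0 := sum_le_sum hsplit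
    _ = ∑ j ∈ Icc 2 k, (#{T ∈ powersetCard k U | #(S ∩ T) = j} : ℝ) * 2 ^ j.choose 2 := by
        rw [sum_comm]
        refine sum_congr rfl fun j _ => ?_
        rw [← sum_filter, sum_const, nsmul_eq_mul]
    _ ≤ ∑ j ∈ Icc 2 k, (#U).choose k *
          ((2 : ℝ) ^ j.choose 2 * ((#S).choose j * k.choose j) / (#U).choose j) := by
        refine sum_le_sum fun j hj => ?_
        calc (#{T ∈ powersetCard k U | #(S ∩ T) = j} : ℝ) * 2 ^ j.choose 2
            ≤ (#S).choose j * k.choose j * (#U).choose k / (#U).choose j * 2 ^ j.choose 2 := by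
              gcongr
              exact card_filter_card_inter_eq_le_div hSU (mem_Icc.1 hj).2 hkU
          _ = _ := by ring
    _ = _ := by rw [mul_sum]

end Overlaps

section Estimates

variable {j k n : ℕ}

lemma descFactorial_mul_pow_le (hkn : k ≤ n) (j : ℕ) :
    k.descFactorial j * n ^ j ≤ n.descFactorial j * k ^ j := by
  induction j with
  | zero => rfl
  | succ j ih =>
    have hfactor : (k - j) * n ≤ (n - j) * k := by
      rw [Nat.sub_mul, Nat.sub_mul, mul_comm k n]
      exact Nat.sub_le_sub_left (Nat.mul_le_mul_left j hkn) _
    calc k.descFactorial (j + 1) * n ^ (j + 1)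
        = (k - j) * n * (k.descFactorial j * n ^ j) := by rw [Nat.descFactorial_succ]; ring
      _ ≤ (n - j) * k * (n.descFactorial j * k ^ j) := Nat.mul_le_mul hfactor ih
      _ = n.descFactorial (j + 1) * k ^ (j + 1) := by rw [Nat.descFactorial_succ]; ring

lemma choose_mul_pow_le_choose_mul_pow (hkn : k ≤ n) (j : ℕ) :
    k.choose j * n ^ j ≤ n.choose j * k ^ j := by
  have h := descFactorial_mul_pow_le hkn j
  rw [Nat.descFactorial_eq_factorial_mul_choose, Nat.descFactorial_eq_factorial_mul_choose,
    mul_assoc, mul_assoc] at h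
  exact Nat.le_of_mul_le_mul_left h j.factorial_pos

/-- Both sides are squared so that all exponents are integers. -/
lemma two_pow_mul_choose_sq_div_choose_sq_le_pow (hjk : j ≤ k) (hkn : k ≤ n) :
    ((2 : ℝ) ^ j.choose 2 * (k.choose j * k.choose j) / n.choose j) ^ 2 ≤
      ((k : ℝ) ^ 4 * 2 ^ k / n ^ 2) ^ j := by
  obtain rfl | hn := n.eq_zero_or_pos
  · obtain rfl : k = 0 := by lia
    obtain rfl : j = 0 := by lia
    norm_num
  have hchoose : (k.choose j : ℝ) / n.choose j ≤ (k / n : ℝ) ^ j := by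
    rw [div_pow, div_le_div_iff₀ (Nat.cast_pos.2 (Nat.choose_pos (hjk.trans hkn)))
      (by positivity), mul_comm (_ ^ j)]
    exact_mod_cast choose_mul_pow_le_choose_mul_pow hkn j
  have hexponent : j.choose 2 * 2 ≤ k * j := by
    rw [Nat.choose_two_right, Nat.div_two_mul_two_of_even (Nat.even_mul_pred_self j), mul_comm]
    exact Nat.mul_le_mul_right j ((Nat.sub_le j 1).trans hjk)
  calc ((2 : ℝ) ^ j.choose 2 * (k.choose j * k.choose j) / n.choose j) ^ 2
      = (2 : ℝ) ^ (j.choose 2 * 2) * (k.choose j * (k.choose j / n.choose j)) ^ 2 := by ring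
    _ ≤ (2 : ℝ) ^ (k * j) * ((k : ℝ) ^ j * (k / n : ℝ) ^ j) ^ 2 := by
        gcongr
        · exact one_le_two
        · exact_mod_cast Nat.choose_le_pow k j
    _ = ((k : ℝ) ^ 4 * 2 ^ k / n ^ 2) ^ j := by
        rw [pow_mul, ← mul_pow, pow_right_comm _ j 2, ← mul_pow]
        congr 1
        ring

lemma two_pow_mul_choose_sq_div_choose_le (hj : 2 ≤ j) (hjk : j ≤ k) (hkn : k ≤ n)
    (hsmall : (k : ℝ) ^ 4 * 2 ^ k / n ^ 2 ≤ 1) :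
    (2 : ℝ) ^ j.choose 2 * (k.choose j * k.choose j) / n.choose j ≤
      (k : ℝ) ^ 4 * 2 ^ k / n ^ 2 :=
  le_of_sq_le_sq ((two_pow_mul_choose_sq_div_choose_sq_le_pow hjk hkn).trans
    (pow_le_pow_of_le_one (by positivity) hsmall hj)) (by positivity)

end Estimates

section CliqueProbability

variable {k n : ℕ}

lemma measureReal_forall_not_isClique_le_of_le_one (hkn : k ≤ n)
    (hsmall : (k : ℝ) ^ 4 * 2 ^ k / n ^ 2 ≤ 1) :
    (uniformMeasure (Sym2 (Fin n) → Bool)).real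
        {ω | ∀ S : Finset (Fin n), #S = k → ¬IsClique n ω S} ≤
      k * ((k : ℝ) ^ 4 * 2 ^ k / n ^ 2) := by
  set x : ℝ := (k : ℝ) ^ 4 * 2 ^ k / n ^ 2
  have hchoose : (0 : ℝ) < n.choose k := Nat.cast_pos.2 (Nat.choose_pos hkn)
  have hoverlap : ∀ S ∈ powersetCard k (univ : Finset (Fin n)),
      ∑ T ∈ powersetCard k univ, ((2 : ℝ) ^ (#(S ∩ T)).choose 2 - 1) ≤
        n.choose k * (k * x) := fun S hS => by
    have hsum := sum_two_pow_choose_card_inter_sub_one_le (subset_univ S) (k := k)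
      (by rwa [card_univ, Fintype.card_fin])
    rw [card_univ, Fintype.card_fin, (mem_powersetCard.1 hS).2] at hsum
    refine hsum.trans ?_
    gcongr
    calc ∑ j ∈ Icc 2 k, (2 : ℝ) ^ j.choose 2 * (k.choose j * k.choose j) / n.choose j
        ≤ #(Icc 2 k) • x := sum_le_card_nsmul _ _ _ fun j hj =>
          two_pow_mul_choose_sq_div_choose_le (mem_Icc.1 hj).1 (mem_Icc.1 hj).2 hkn hsmall
      _ ≤ k * x := by
        rw [nsmul_eq_mul, Nat.card_Icc]
        gcongr
        lia
  refine (measureReal_forall_not_isClique_le_sum hkn).trans ((div_le_iff₀ (by positivity)).2 ?_)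
  calc _ ≤ #(powersetCard k (univ : Finset (Fin n))) • (n.choose k * (k * x)) :=
        sum_le_card_nsmul _ _ _ hoverlap
    _ = k * x * n.choose k ^ 2 := by
        rw [card_powersetCard, card_univ, Fintype.card_fin, nsmul_eq_mul]
        ring

lemma measureReal_forall_not_isClique_le (hn : n ≠ 0) (k : ℕ) :
    (uniformMeasure (Sym2 (Fin n) → Bool)).real
        {ω | ∀ S : Finset (Fin n), #S = k → ¬IsClique n ω S} ≤ (k : ℝ) ^ 5 * 2 ^ k / n ^ 2 := by
  obtain htrivial | hlt := le_or_gt 1 ((k : ℝ) ^ 5 * 2 ^ k / n ^ 2)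
  · exact measureReal_le_one.trans htrivial
  have hlt' : k ^ 5 * 2 ^ k < n ^ 2 := by
    rw [div_lt_one (by positivity)] at hlt
    exact_mod_cast hlt
  have hpow {m : ℕ} (hm₀ : m ≠ 0) (hm₅ : m ≤ 5) : k ^ m ≤ k ^ 5 := by
    obtain rfl | hk := k.eq_zero_or_pos
    · simp [hm₀]
    · exact Nat.pow_le_pow_right hk hm₅
  have hkn : k ≤ n := by
    refine (lt_of_pow_lt_pow_left₀ 2 n.zero_le (lt_of_le_of_lt ?_ hlt')).le
    exact (hpow two_ne_zero (by norm_num)).trans (Nat.le_mul_of_pos_right _ (by positivity))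
  have hsmall : (k : ℝ) ^ 4 * 2 ^ k / n ^ 2 ≤ 1 := by
    rw [div_le_one (by positivity)]
    exact_mod_cast (Nat.mul_le_mul_right (2 ^ k) (hpow four_ne_zero (by norm_num))).trans hlt'.le
  exact (measureReal_forall_not_isClique_le_of_le_one hkn hsmall).trans_eq (by ring)

end CliqueProbability

section Asymptotics

variable {a b c : ℝ}

lemma isBigO_natCeil_mul_logb_log (ha : 0 < a) (hc : 1 < c) :
    (fun x : ℝ => (⌈a * Real.logb c x⌉₊ : ℝ)) =O[atTop] Real.log := by
  have hatTop : Tendsto (fun x => a * Real.logb c x) atTop atTop :=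
    (Real.tendsto_logb_atTop hc).const_mul_atTop ha
  have hlogb : (fun x => a * Real.logb c x) =O[atTop] Real.log :=
    ((isBigO_refl Real.log atTop).const_mul_left (a / Real.log c)).congr_left fun x => by
      rw [Real.logb]
      ring
  exact (isEquivalent_nat_ceil.comp_tendsto hatTop).isBigO.trans hlogb

lemma isBigO_pow_natCeil_mul_logb (ha : 0 ≤ a) (hc : 1 < c) :
    (fun x : ℝ => c ^ ⌈a * Real.logb c x⌉₊) =O[atTop] fun x => x ^ a := by
  have hc₀ : 0 < c := zero_lt_one.trans hc
  refine .of_bound c ?_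
  filter_upwards [eventually_ge_atTop 1] with x hx
  have hexponent : 0 ≤ a * Real.logb c x := mul_nonneg ha (Real.logb_nonneg hc hx)
  rw [Real.norm_of_nonneg (by positivity), Real.norm_of_nonneg (by positivity)]
  calc c ^ ⌈a * Real.logb c x⌉₊ = c ^ (⌈a * Real.logb c x⌉₊ : ℝ) := (Real.rpow_natCast _ _).symm
    _ ≤ c ^ (a * Real.logb c x + 1) :=
        Real.rpow_le_rpow_of_exponent_le hc.le (Nat.ceil_lt_add_one hexponent).le
    _ = c * x ^ a := by
        rw [Real.rpow_add_one hc₀.ne', mul_comm a, Real.rpow_mul hc₀.le,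
          Real.rpow_logb hc₀ hc.ne' (zero_lt_one.trans_le hx), mul_comm]

lemma isLittleO_natCeil_mul_logb_pow_mul_pow (ha : 0 < a) (hab : a < b) (hc : 1 < c) (m : ℕ) :
    (fun x : ℝ => (⌈a * Real.logb c x⌉₊ : ℝ) ^ m * c ^ ⌈a * Real.logb c x⌉₊) =o[atTop]
      fun x => x ^ b := by
  have hpoly : (fun x : ℝ => (⌈a * Real.logb c x⌉₊ : ℝ) ^ m) =o[atTop] fun x => x ^ (b - a) := by
    refine ((isBigO_natCeil_mul_logb_log ha hc).pow m).trans_isLittleO ?_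
    simpa only [Real.rpow_natCast] using isLittleO_log_rpow_rpow_atTop (m : ℝ) (sub_pos.2 hab)
  refine (hpoly.mul_isBigO (isBigO_pow_natCeil_mul_logb ha.le hc)).congr' .rfl ?_
  filter_upwards [eventually_gt_atTop 0] with x hx
  rw [← Real.rpow_add hx, sub_add_cancel]

end Asymptotics

/-- for every `ε` with `0 < ε < 2`, whp the Erdős–Rényi graph
`G(n,1/2)` (uniform measure over all graphs on `n` vertices) contains a clique
on at least `(2-ε)·log₂ n` vertices. -/
theorem clique_number_lower_bound (ε : ℝ) (hε₀ : 0 < ε) (hε₂ : ε < 2) :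
    Tendsto
      (fun n : ℕ =>
        uniformMeasure (Sym2 (Fin n) → Bool)
          {ω | ∃ S : Finset (Fin n),
            (2 - ε) * Real.logb 2 n ≤ (S.card : ℝ) ∧ IsClique n ω S})
      atTop (𝓝 1) := by
  set k : ℕ → ℕ := fun n => ⌈(2 - ε) * Real.logb 2 n⌉₊
  have hbound : Tendsto (fun n : ℕ => (k n : ℝ) ^ 5 * 2 ^ k n / n ^ 2) atTop (𝓝 0) := by
    have hlittleO := isLittleO_natCeil_mul_logb_pow_mul_pow (sub_pos.2 hε₂) (sub_lt_self 2 hε₀)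
      one_lt_two 5
    simp only [Real.rpow_two] at hlittleO
    exact (hlittleO.comp_tendsto tendsto_natCast_atTop_atTop).tendsto_div_nhds_zero
  have hfail : Tendsto (fun n => (uniformMeasure (Sym2 (Fin n) → Bool)).real
      {ω | ∀ S : Finset (Fin n), #S = k n → ¬IsClique n ω S}) atTop (𝓝 0) :=
    squeeze_zero' (.of_forall fun _ => measureReal_nonneg)
      ((eventually_ne_atTop 0).mono fun n hn => measureReal_forall_not_isClique_le hn (k n)) hbound
  refine tendsto_of_tendsto_of_tendsto_of_le_of_le
    (tendsto_measure_compl_nhds_one (fun _ => .of_discrete) hfail) tendsto_const_nhds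
    (fun n => measure_mono fun ω hω => ?_) (fun n => prob_le_one)
  obtain ⟨S, hS, hclique⟩ : ∃ S : Finset (Fin n), #S = k n ∧ IsClique n ω S := by
    simpa using hω
  exact ⟨S, hS ▸ Nat.le_ceil _, hclique⟩
end

section
/- For every ε > 0 there exists d₀ such that for every d ≥ d₀ there exist constants 0 < ν₁ < ν₂ < 1 with the following property: whp as n → ∞, for every two independent sets I and J of the random graph G(n,d/n), each of cardinality at least (1 + 1/√2 + ε)·(log d / d)·n, the size of the symmetric difference |I Δ J| does not lie in the open interval (ν₁·n, ν₂·n). (This is the Overlap Gap Property for independent sets at the multiplicative factor 1/2 + 1/(2√2) of the optimal size 2(1+o_d(1))(log d/d)n.) -/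
open MeasureTheory Filter Topology

/-- The Bernoulli measure on `Bool` with success probability `p`
(a probability measure whenever `0 ≤ p ≤ 1`). -/
noncomputable def bernoulliMeasure (p : ℝ) : Measure Bool :=
  ENNReal.ofReal p • Measure.dirac true + ENNReal.ofReal (1 - p) • Measure.dirac false

/-- The Erdős–Rényi measure `G(n,p)`: each of the unordered pairs of vertices is an
edge independently with probability `p`; `ω : Sym2 (Fin n) → Bool` records the
edge indicators. -/
noncomputable def erdosRenyi (n : ℕ) (p : ℝ) : Measure (Sym2 (Fin n) → Bool) :=
  Measure.pi fun _ => bernoulliMeasure p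

/-- A finite vertex set `S` is an independent set of the graph encoded by `ω` if
no pair of distinct vertices of `S` forms an edge. -/
def IsIndepSet (n : ℕ) (ω : Sym2 (Fin n) → Bool) (S : Finset (Fin n)) : Prop :=
  ∀ i ∈ S, ∀ j ∈ S, i ≠ j → ω s(i, j) = false

/-!
First moment over pairs. Let `r = (log d / d) n`, let `I`, `J` have at least `s r` vertices each,
and write `a = |I|`, `b = |J|`, `c = |I ∩ J|`. Both sets are independent with probability about
`exp (-(d / n) (a² + b² - c²) / 2)`. If `|I Δ J|` is close to `2 (s - 1) r` and `(s - 1)² > 1 / 2`,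
that is `s > 1 + 1 / √2`, then the exponent exceeds `log d * |I ∪ J|` by a multiple of
`(log d)² n / d`. Weighting each pair by `d ^ (-|I ∪ J|)` gives the total `(1 + 3 / d) ^ n`, at most
`exp (3 n / d)`, so for large `log d` the excess beats the entropy.
-/

open scoped Finset

section Counting

variable {V : Type*} [DecidableEq V]

/-- Each vertex outside `I ∪ J` contributes the factor `1`, and each of the three other ways
to lie in `I` or `J` contributes `t`. -/
lemma sum_pow_card_union {R : Type*} [CommSemiring R] [Fintype V] (t : R) :
    ∑ P : Finset V × Finset V, t ^ #(P.1 ∪ P.2) = (1 + 3 * t) ^ Fintype.card V := by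
  have hweights : (∑ k : Bool × Bool, if k.1 || k.2 then t else 1) = 1 + 3 * t := by
    simp only [Fintype.sum_prod_type, Fintype.sum_bool, Bool.or_true, Bool.or_false, if_true,
      Bool.false_eq_true, if_false]
    ring
  rw [← hweights, ← Finset.card_univ, ← Finset.prod_const, Fintype.prod_sum]
  refine Finset.sum_bij' (fun P _ i => (decide (i ∈ P.1), decide (i ∈ P.2)))
    (fun g _ => (Finset.univ.filter fun i => (g i).1, Finset.univ.filter fun i => (g i).2))
    (by simp) (by simp) (fun P _ => by ext <;> simp) (fun g _ => by ext <;> simp)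
    fun P _ => ?_
  simp [Finset.prod_ite, Finset.filter_or]

lemma card_symmDiff_add_two_mul_card_inter (I J : Finset V) :
    #(symmDiff I J) + 2 * #(I ∩ J) = #I + #J := by
  have hunion : #(symmDiff I J) + #(I ∩ J) = #(I ∪ J) := by
    rw [symmDiff_eq_sup_sdiff_inf]
    exact Finset.card_sdiff_add_card_eq_card Finset.inter_subset_union
  have := Finset.card_union_add_card_inter I J
  lia

/-- The unordered pairs of distinct elements of `S`: the potential edges inside `S`. -/
def innerPairs (S : Finset V) : Finset (Sym2 V) :=
  S.offDiag.image Sym2.mk.uncurry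

lemma mk_mem_innerPairs {S : Finset V} {i j : V} :
    s(i, j) ∈ innerPairs S ↔ i ∈ S ∧ j ∈ S ∧ i ≠ j := by
  simp only [innerPairs, Finset.mem_image, Finset.mem_offDiag, Prod.exists,
    Function.uncurry_apply_pair, Sym2.eq_iff]
  grind

lemma innerPairs_inter (S T : Finset V) :
    innerPairs (S ∩ T) = innerPairs S ∩ innerPairs T := by
  ext e
  induction e using Sym2.ind
  simp only [Finset.mem_inter, mk_mem_innerPairs]
  tauto

lemma cast_card_innerPairs (S : Finset V) : (#(innerPairs S) : ℝ) = #S * (#S - 1) / 2 := by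
  rw [innerPairs, Sym2.card_image_offDiag, Nat.cast_choose_two]

lemma two_mul_card_innerPairs_union (I J : Finset V) :
    2 * (#(innerPairs I ∪ innerPairs J) : ℝ) =
      (#I : ℝ) ^ 2 + (#J : ℝ) ^ 2 - (#(I ∩ J) : ℝ) ^ 2 - #(I ∪ J) := by
  simp only [Finset.cast_card_union, ← innerPairs_inter, cast_card_innerPairs]
  ring

end Counting

section RandomGraph

variable {p : ℝ}

lemma isProbabilityMeasure_bernoulliMeasure (h0 : 0 ≤ p) (h1 : p ≤ 1) :
    IsProbabilityMeasure (bernoulliMeasure p) :=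
  ⟨by simp [bernoulliMeasure, ← ENNReal.ofReal_add h0 (sub_nonneg.2 h1)]⟩

lemma isProbabilityMeasure_erdosRenyi (n : ℕ) (h0 : 0 ≤ p) (h1 : p ≤ 1) :
    IsProbabilityMeasure (erdosRenyi n p) := by
  have := isProbabilityMeasure_bernoulliMeasure h0 h1
  unfold erdosRenyi
  infer_instance

lemma erdosRenyi_forall_eq_false {n : ℕ} (h0 : 0 ≤ p) (h1 : p ≤ 1) (F : Finset (Sym2 (Fin n))) :
    erdosRenyi n p {ω | ∀ e ∈ F, ω e = false} = ENNReal.ofReal ((1 - p) ^ #F) := by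
  have := isProbabilityMeasure_bernoulliMeasure h0 h1
  have hpi : {ω : Sym2 (Fin n) → Bool | ∀ e ∈ F, ω e = false} =
      (F : Set (Sym2 (Fin n))).pi fun _ => {false} := by
    ext; simp [Set.mem_pi]
  have hfalse : bernoulliMeasure p {false} = ENNReal.ofReal (1 - p) := by
    simp [bernoulliMeasure]
  rw [hpi, erdosRenyi, Measure.pi_pi_finset, Finset.prod_const, hfalse,
    ENNReal.ofReal_pow (sub_nonneg.2 h1)]

lemma isIndepSet_iff_forall_mem_innerPairs {n : ℕ} {ω : Sym2 (Fin n) → Bool}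
    {S : Finset (Fin n)} : IsIndepSet n ω S ↔ ∀ e ∈ innerPairs S, ω e = false := by
  simp only [IsIndepSet, Sym2.forall, mk_mem_innerPairs]
  grind

lemma erdosRenyi_isIndepSet_pair_le {n : ℕ} (h0 : 0 ≤ p) (h1 : p ≤ 1) (I J : Finset (Fin n)) :
    erdosRenyi n p {ω | IsIndepSet n ω I ∧ IsIndepSet n ω J} ≤
      ENNReal.ofReal (Real.exp (-(p * #(innerPairs I ∪ innerPairs J)))) := by
  simp only [isIndepSet_iff_forall_mem_innerPairs, ← Finset.forall_mem_union]
  rw [erdosRenyi_forall_eq_false h0 h1, mul_comm, ← mul_neg, Real.exp_nat_mul]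
  exact ENNReal.ofReal_le_ofReal
    (pow_le_pow_left₀ (sub_nonneg.2 h1) (Real.one_sub_le_exp_neg p) _)

end RandomGraph

section Exponent

variable {s ε : ℝ}

/-- The extremal configuration is `a = b = s * r`, `c = r`, where the quadratic exceeds
`r * (a + b - c)` by exactly `((s - 1) ^ 2 - 1 / 2) * r ^ 2`; this is where the threshold
`s = 1 + 1 / √2` comes from. -/
lemma mul_union_add_le_quadratic {r a b c : ℝ} (hs : 1 ≤ s) (hsε : 1 / 2 + ε ^ 2 ≤ (s - 1) ^ 2)
    (hr : 0 ≤ r) (hab : 2 * (s * r) ≤ a + b) (hlo : 2 * (s - 1) * r ≤ a + b - 2 * c)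
    (hhi : a + b - 2 * c ≤ 2 * (s - 1 + ε) * r) :
    r * (a + b - c) + ε ^ 2 * r ^ 2 / 2 ≤ (a ^ 2 + b ^ 2 - c ^ 2) / 2 := by
  obtain ⟨h, hh⟩ : ∃ h, h = (a + b) / 2 - s * r := ⟨_, rfl⟩
  obtain ⟨τ, hτ⟩ : ∃ τ, τ = (a + b) / 2 - c - (s - 1) * r := ⟨_, rfl⟩
  have hh0 : 0 ≤ h := by linarith
  have hτ0 : 0 ≤ τ := by linarith
  have hτε : τ ^ 2 ≤ (ε * r) ^ 2 := pow_le_pow_left₀ hτ0 (by linarith) 2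
  have hcross : 0 ≤ h * (2 * ((s - 1) * r) + τ) := by
    have := mul_nonneg (sub_nonneg.2 hs) hr
    positivity
  have hmain : (1 / 2 + ε ^ 2) * r ^ 2 ≤ (s - 1) ^ 2 * r ^ 2 := by gcongr
  have hexpand : (a ^ 2 + b ^ 2 - c ^ 2) / 2 - r * (a + b - c) =
      (s - 1) ^ 2 * r ^ 2 - r ^ 2 / 2 - τ ^ 2 / 2 + h ^ 2 / 2 + h * (2 * ((s - 1) * r) + τ) +
        (a - b) ^ 2 / 4 := by
    rw [hh, hτ]; ring
  linarith [sq_nonneg h, sq_nonneg (a - b)]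

lemma log_mul_union_add_le {d n a b c m : ℝ} (hs : 1 ≤ s)
    (hsε : 1 / 2 + ε ^ 2 ≤ (s - 1) ^ 2) (hd : 1 < d) (hlog : 3 ≤ ε * Real.log d) (hn : 0 < n)
    (hab : 2 * (s * (Real.log d / d) * n) ≤ a + b)
    (hlo : 2 * (s - 1) * (Real.log d / d) * n ≤ a + b - 2 * c)
    (hhi : a + b - 2 * c ≤ 2 * (s - 1 + ε) * (Real.log d / d) * n)
    (hun : a + b - c ≤ n) (hm : 2 * m = a ^ 2 + b ^ 2 - c ^ 2 - (a + b - c)) :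
    Real.log d * (a + b - c) + 4 * (n / d) - d / 2 ≤ d / n * m := by
  have : 0 < d := by linarith
  have hlog0 : 0 < Real.log d := Real.log_pos hd
  have hquad := mul_union_add_le_quadratic (a := a) (b := b) (c := c)
    (r := Real.log d / d * n) hs hsε (by positivity)
    (by linarith) (by linarith) (by linarith)
  have hexcess : 4 * (n / d) ≤ (ε * Real.log d) ^ 2 / 2 * (n / d) := by
    gcongr
    nlinarith
  have hdiag : d / n * ((a + b - c) / 2) ≤ d / 2 :=
    calc d / n * ((a + b - c) / 2) ≤ d / n * (n / 2) := by gcongr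
      _ = d / 2 := by field_simp
  have hscale := mul_le_mul_of_nonneg_left hquad (show 0 ≤ d / n by positivity)
  have hleft : d / n * (Real.log d / d * n * (a + b - c) + ε ^ 2 * (Real.log d / d * n) ^ 2 / 2) =
      Real.log d * (a + b - c) + (ε * Real.log d) ^ 2 / 2 * (n / d) := by
    field_simp
  have hright : d / n * m = d / n * ((a ^ 2 + b ^ 2 - c ^ 2) / 2) - d / n * ((a + b - c) / 2) := by
    rw [← mul_sub]; congr 1; linarith
  linarith

end Exponent

section FirstMoment

/-- The event that no two independent sets with at least `k` vertices each have a symmetric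
difference of size strictly between `lo` and `hi`. -/
def overlapGapEvent (n : ℕ) (k lo hi : ℝ) : Set (Sym2 (Fin n) → Bool) :=
  {ω | ∀ I J : Finset (Fin n), IsIndepSet n ω I → IsIndepSet n ω J →
    k ≤ (#I : ℝ) → k ≤ (#J : ℝ) → (#(symmDiff I J) : ℝ) ∉ Set.Ioo lo hi}

open Classical in
/-- The pairs of vertex sets which `overlapGapEvent n k lo hi` forbids to be simultaneously
independent. -/
noncomputable def forbiddenPairs (n : ℕ) (k lo hi : ℝ) : Finset (Finset (Fin n) × Finset (Fin n)) :=
  {P | k ≤ (#P.1 : ℝ) ∧ k ≤ (#P.2 : ℝ) ∧ (#(symmDiff P.1 P.2) : ℝ) ∈ Set.Ioo lo hi}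

lemma measure_compl_overlapGapEvent_le {n : ℕ} (μ : Measure (Sym2 (Fin n) → Bool))
    (k lo hi : ℝ) :
    μ (overlapGapEvent n k lo hi)ᶜ ≤
      ∑ P ∈ forbiddenPairs n k lo hi, μ {ω | IsIndepSet n ω P.1 ∧ IsIndepSet n ω P.2} := by
  refine (measure_mono fun ω hω => ?_).trans (measure_biUnion_finset_le _ _)
  simp only [overlapGapEvent, Set.mem_compl_iff, Set.mem_ofPred_eq] at hω
  push Not at hω
  obtain ⟨I, J, hI, hJ, hkI, hkJ, hIJ⟩ := hω
  exact Set.mem_biUnion (x := (I, J)) (by simp [forbiddenPairs, hkI, hkJ, hIJ.1, hIJ.2]) ⟨hI, hJ⟩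

variable {s ε d : ℝ} {n : ℕ}

lemma erdosRenyi_forbiddenPair_le (hs : 1 ≤ s) (hsε : 1 / 2 + ε ^ 2 ≤ (s - 1) ^ 2) (hd : 1 < d)
    (hlog : 3 ≤ ε * Real.log d) (hdn : d ≤ n) {P : Finset (Fin n) × Finset (Fin n)}
    (hP : P ∈ forbiddenPairs n (s * (Real.log d / d) * n) (2 * (s - 1) * (Real.log d / d) * n)
      (2 * (s - 1 + ε) * (Real.log d / d) * n)) :
    erdosRenyi n (d / n) {ω | IsIndepSet n ω P.1 ∧ IsIndepSet n ω P.2} ≤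
      ENNReal.ofReal (Real.exp (d / 2 - 4 * (n / d)) * (1 / d) ^ #(P.1 ∪ P.2)) := by
  obtain ⟨I, J⟩ := P
  obtain ⟨hI, hJ, hlo, hhi⟩ : s * (Real.log d / d) * n ≤ (#I : ℝ) ∧
      s * (Real.log d / d) * n ≤ (#J : ℝ) ∧ (#(symmDiff I J) : ℝ) ∈ Set.Ioo _ _ := by
    simpa only [forbiddenPairs, Finset.mem_filter_univ] using hP
  have hd0 : 0 < d := by linarith
  have hn : (0 : ℝ) < n := by linarith
  have hunion_le : (#(I ∪ J) : ℝ) ≤ n := by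
    exact_mod_cast (Finset.card_le_univ (I ∪ J)).trans_eq (Fintype.card_fin n)
  have hpairs := two_mul_card_innerPairs_union I J
  have hsymmDiff : (#(symmDiff I J) : ℝ) = #I + #J - 2 * #(I ∩ J) := by
    rw [eq_sub_iff_add_eq]
    exact_mod_cast card_symmDiff_add_two_mul_card_inter I J
  have hunion : (#(I ∪ J) : ℝ) = #I + #J - #(I ∩ J) := Finset.cast_card_union
  rw [hsymmDiff] at hlo hhi
  rw [hunion] at hunion_le hpairs
  have hexponent := log_mul_union_add_le hs hsε hd hlog hn (by linarith) hlo.le hhi.le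
    hunion_le hpairs
  refine (erdosRenyi_isIndepSet_pair_le (by positivity) ((div_le_one hn).2 hdn) I J).trans
    (ENNReal.ofReal_le_ofReal ?_)
  have hweight : (1 / d) ^ #(I ∪ J) = Real.exp (-(Real.log d * #(I ∪ J))) := by
    rw [mul_comm, ← mul_neg, Real.exp_nat_mul, Real.exp_neg, Real.exp_log hd0, one_div]
  rw [hweight, ← Real.exp_add, Real.exp_le_exp, hunion]
  linarith

lemma erdosRenyi_compl_overlapGapEvent_le (hs : 1 ≤ s) (hsε : 1 / 2 + ε ^ 2 ≤ (s - 1) ^ 2)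
    (hd : 1 < d) (hlog : 3 ≤ ε * Real.log d) (hdn : d ≤ n) :
    erdosRenyi n (d / n) (overlapGapEvent n (s * (Real.log d / d) * n)
        (2 * (s - 1) * (Real.log d / d) * n) (2 * (s - 1 + ε) * (Real.log d / d) * n))ᶜ ≤
      ENNReal.ofReal (Real.exp (d / 2 - n / d)) := by
  have : 0 < d := by linarith
  have hentropy : (1 + 3 * (1 / d)) ^ n ≤ Real.exp (3 * (n / d)) :=
    calc (1 + 3 * (1 / d)) ^ n ≤ Real.exp (3 * (1 / d)) ^ n := by
          gcongr
          linarith [Real.add_one_le_exp (3 * (1 / d))]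
      _ = Real.exp (3 * (n / d)) := by
          rw [← Real.exp_nat_mul]; ring_nf
  calc _ ≤ ∑ P ∈ forbiddenPairs n _ _ _,
        erdosRenyi n (d / n) {ω | IsIndepSet n ω P.1 ∧ IsIndepSet n ω P.2} :=
        measure_compl_overlapGapEvent_le _ _ _ _
    _ ≤ ∑ P ∈ forbiddenPairs n _ _ _,
        ENNReal.ofReal (Real.exp (d / 2 - 4 * (n / d)) * (1 / d) ^ #(P.1 ∪ P.2)) :=
        Finset.sum_le_sum fun _ => erdosRenyi_forbiddenPair_le hs hsε hd hlog hdn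
    _ ≤ ∑ P : Finset (Fin n) × Finset (Fin n),
        ENNReal.ofReal (Real.exp (d / 2 - 4 * (n / d)) * (1 / d) ^ #(P.1 ∪ P.2)) :=
        Finset.sum_le_univ_sum_of_nonneg fun _ => zero_le
    _ = ENNReal.ofReal (Real.exp (d / 2 - 4 * (n / d)) * (1 + 3 * (1 / d)) ^ n) := by
        rw [← ENNReal.ofReal_sum_of_nonneg fun _ _ => by positivity, ← Finset.mul_sum,
          sum_pow_card_union, Fintype.card_fin]
    _ ≤ ENNReal.ofReal (Real.exp (d / 2 - 4 * (n / d)) * Real.exp (3 * (n / d))) := by gcongr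
    _ = ENNReal.ofReal (Real.exp (d / 2 - n / d)) := by
        rw [← Real.exp_add]; ring_nf

end FirstMoment

section Asymptotics

lemma tendsto_measure_one_of_compl {ι : Type*} {l : Filter ι} {Ω : ι → Type*}
    [∀ i, MeasurableSpace (Ω i)] {μ : ∀ i, Measure (Ω i)} {A : ∀ i, Set (Ω i)}
    (hμ : ∀ᶠ i in l, IsProbabilityMeasure (μ i))
    (hA : Tendsto (fun i => μ i (A i)ᶜ) l (𝓝 0)) : Tendsto (fun i => μ i (A i)) l (𝓝 1) := by
  have hlower : Tendsto (fun i => 1 - μ i (A i)ᶜ) l (𝓝 1) := by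
    simpa using ENNReal.Tendsto.sub tendsto_const_nhds hA (Or.inl ENNReal.one_ne_top)
  refine tendsto_of_tendsto_of_tendsto_of_le_of_le' hlower tendsto_const_nhds ?_ ?_
  · filter_upwards [hμ] with i _
    rw [tsub_le_iff_right, ← measure_univ (μ := μ i)]
    exact measure_univ_le_add_compl (A i)
  · filter_upwards [hμ] with i _ using prob_le_one

variable {s ε d : ℝ}

lemma tendsto_erdosRenyi_overlapGapEvent (hs : 1 ≤ s) (hsε : 1 / 2 + ε ^ 2 ≤ (s - 1) ^ 2)
    (hd : 1 < d) (hlog : 3 ≤ ε * Real.log d) :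
    Tendsto (fun n : ℕ => erdosRenyi n (d / n) (overlapGapEvent n (s * (Real.log d / d) * n)
      (2 * (s - 1) * (Real.log d / d) * n) (2 * (s - 1 + ε) * (Real.log d / d) * n)))
      atTop (𝓝 1) := by
  have hd0 : 0 < d := by linarith
  have hdn : ∀ᶠ n : ℕ in atTop, d ≤ n := tendsto_natCast_atTop_atTop.eventually_ge_atTop d
  refine tendsto_measure_one_of_compl ?_ ?_
  · filter_upwards [hdn] with n hn
    exact isProbabilityMeasure_erdosRenyi n (by positivity) (div_le_one_of_le₀ hn n.cast_nonneg)
  · have hexp : Tendsto (fun n : ℕ => Real.exp (d / 2 - n / d)) atTop (𝓝 0) :=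
      Real.tendsto_exp_atBot.comp <| tendsto_atBot_add_const_left _ _ <|
        tendsto_neg_atTop_atBot.comp <| tendsto_natCast_atTop_atTop.atTop_div_const hd0
    refine tendsto_of_tendsto_of_tendsto_of_le_of_le' tendsto_const_nhds
      (by simpa using ENNReal.tendsto_ofReal hexp) (Eventually.of_forall fun _ => zero_le) ?_
    filter_upwards [hdn] with n hn
    exact erdosRenyi_compl_overlapGapEvent_le hs hsε hd hlog hn

lemma eventually_le_mul_log_and_mul_log_div_lt_one (hε : 0 < ε) (C : ℝ) :
    ∀ᶠ d : ℝ in atTop, 1 < d ∧ 3 ≤ ε * Real.log d ∧ C * (Real.log d / d) < 1 := by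
  have hsmall : Tendsto (fun d : ℝ => C * (Real.log d / d)) atTop (𝓝 0) := by
    simpa using Real.isLittleO_log_id_atTop.tendsto_div_nhds_zero.const_mul C
  exact (eventually_gt_atTop 1).and
    (((Real.tendsto_log_atTop.const_mul_atTop hε).eventually_ge_atTop 3).and
      (hsmall.eventually_lt_const one_pos))

end Asymptotics

/-- Overlap Gap Property for independent sets: for every `ε > 0`
there is `d₀` such that for every `d ≥ d₀` there are `0 < ν₁ < ν₂ < 1` with the
following property, whp as `n → ∞` in `G(n,d/n)`: any two independent sets `I, J`
of cardinality at least `(1 + 1/√2 + ε)·(log d/d)·n` have symmetric difference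
whose size does not lie in the open interval `(ν₁·n, ν₂·n)`. -/
theorem overlap_gap_property_independent_sets (ε : ℝ) (hε : 0 < ε) :
    ∃ d₀ : ℝ, ∀ d : ℝ, d₀ ≤ d →
      ∃ ν₁ ν₂ : ℝ, 0 < ν₁ ∧ ν₁ < ν₂ ∧ ν₂ < 1 ∧
        Tendsto
          (fun n : ℕ =>
            erdosRenyi n (d / n)
              {ω | ∀ I J : Finset (Fin n),
                IsIndepSet n ω I → IsIndepSet n ω J →
                (1 + 1 / Real.sqrt 2 + ε) * (Real.log d / d) * n ≤ (I.card : ℝ) →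
                (1 + 1 / Real.sqrt 2 + ε) * (Real.log d / d) * n ≤ (J.card : ℝ) →
                ((symmDiff I J).card : ℝ) ∉ Set.Ioo (ν₁ * n) (ν₂ * n)})
          atTop (𝓝 1) := by
  have hq : (1 / √2) ^ 2 = (1 / 2 : ℝ) := by rw [div_pow, Real.sq_sqrt zero_le_two, one_pow]
  have hq0 : 0 < 1 / √2 := by positivity
  set s : ℝ := 1 + 1 / √2 + ε with hs
  have hs1 : 0 < s - 1 := by rw [hs]; linarith
  have hsε : 1 / 2 + ε ^ 2 ≤ (s - 1) ^ 2 := by rw [hs]; nlinarith [mul_pos hq0 hε]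
  obtain ⟨d₀, hd₀⟩ := eventually_atTop.1
    (eventually_le_mul_log_and_mul_log_div_lt_one hε (2 * (s - 1 + ε)))
  refine ⟨d₀, fun d hdd₀ => ?_⟩
  obtain ⟨hd, hlog, hν₂⟩ := hd₀ d hdd₀
  have hratio : 0 < Real.log d / d := div_pos (Real.log_pos hd) (by linarith)
  refine ⟨2 * (s - 1) * (Real.log d / d), 2 * (s - 1 + ε) * (Real.log d / d), by positivity,
    by gcongr; linarith, hν₂, ?_⟩
  exact tendsto_erdosRenyi_overlapGapEvent (by linarith) hsε hd hlog
end

section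
/- Let G_n denote the output of the greedy independent set algorithm applied to G(n,d/n). For every ε > 0 there exists d₀ such that for every d ≥ d₀, whp as n → ∞ the greedy algorithm produces an independent set of size at least (1−ε)·(log d / d)·n, i.e., roughly half of the optimal independent set size 2(1+o_d(1))·(log d/d)·n. -/
open MeasureTheory Filter Topology

open scoped Classical in
/-- The greedy independent set algorithm: process the vertices `0,1,…,n-1` in
increasing order, maintaining an independent set `I` initialized to `∅`, and add
vertex `v` to `I` iff `v` is adjacent to no vertex currently in `I`. -/
noncomputable def greedyIndepSet (n : ℕ) (ω : Sym2 (Fin n) → Bool) : Finset (Fin n) :=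
  (List.finRange n).foldl
    (fun I v => if ∀ u ∈ I, ω s(u, v) = false then insert v I else I) ∅

/-!
Write `q = 1 - p`, and let `I` be the set chosen from the vertices processed so far. The next vertex
is joined to `I` by fresh edges, so it is accepted with conditional probability `q ^ |I|`, and then
`q⁻¹ ^ |I|` grows by `q⁻¹ ^ |I| * p / q`. Hence `q⁻¹ ^ |I|` increases by exactly `p / q` on average
at every step, whatever `I` is: its mean after `n` steps is `1 + n * p / q`, and the same
computation for the square gives the variance `(n choose 2) * (p / q) ^ 3`. For `p = d / n` the mean
tends to `1 + d` and the variance to `0`. Since `q⁻¹ ^ |I|` is about `exp (d * |I| / n)`,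
Chebyshev's inequality shows that `|I| / n` is whp at least any given `c < log (1 + d) / d`, and
`log d / d < log (1 + d) / d`.
-/

section Resampling

variable {ι : Type*} [Fintype ι] {α : ι → Type*} [∀ i, MeasurableSpace (α i)]
  (μ : ∀ i, Measure (α i)) [∀ i, IsProbabilityMeasure (μ i)]

theorem measurePreserving_piecewise (T : Set ι) [DecidablePred (· ∈ T)] :
    MeasurePreserving (fun x : (∀ i, α i) × (∀ i, α i) => T.piecewise x.1 x.2)
      ((Measure.pi μ).prod (Measure.pi μ)) (Measure.pi μ) := by
  have hmeas : Measurable fun x : (∀ i, α i) × (∀ i, α i) => T.piecewise x.1 x.2 := by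
    refine measurable_pi_lambda _ fun i => ?_
    by_cases hi : i ∈ T <;> simp only [Set.piecewise, hi, if_true, if_false] <;> fun_prop
  refine ⟨hmeas, (Measure.pi_eq fun s hs => ?_).symm⟩
  have hpre : (fun x : (∀ i, α i) × (∀ i, α i) => T.piecewise x.1 x.2) ⁻¹' Set.univ.pi s =
      Set.univ.pi (T.piecewise s fun _ => Set.univ) ×ˢ
        Set.univ.pi (T.piecewise (fun _ => Set.univ) s) := by
    ext x
    simp only [Set.mem_preimage, Set.mem_prod, Set.mem_univ_pi, ← forall_and]
    refine forall_congr' fun i => ?_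
    by_cases hi : i ∈ T <;> simp [hi]
  rw [Measure.map_apply hmeas (.univ_pi hs), hpre, Measure.prod_prod, Measure.pi_pi, Measure.pi_pi,
    ← Finset.prod_mul_distrib]
  refine Finset.prod_congr rfl fun i _ => ?_
  by_cases hi : i ∈ T <;> simp [hi]

theorem integral_pi_eq_integral_integral_of_dependsOn {E : Type*} [NormedAddCommGroup E]
    [NormedSpace ℝ E] {T : Set ι} {g : (∀ i, α i) → (∀ i, α i) → E}
    (hint : Integrable (fun x => g x x) (Measure.pi μ))
    (hleft : ∀ y, DependsOn (fun x => g x y) T) (hright : ∀ x, DependsOn (g x) Tᶜ) :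
    ∫ x, g x x ∂Measure.pi μ = ∫ x, ∫ y, g x y ∂Measure.pi μ ∂Measure.pi μ := by
  classical
  have hsplit (z : (∀ i, α i) × (∀ i, α i)) :
      g (T.piecewise z.1 z.2) (T.piecewise z.1 z.2) = g z.1 z.2 :=
    (hleft _ fun i hi => by simp [hi]).trans (hright _ fun i (hi : i ∉ T) => by simp [hi])
  have hpres := measurePreserving_piecewise μ T
  have hint' : Integrable (fun z => g z.1 z.2) ((Measure.pi μ).prod (Measure.pi μ)) :=
    (hpres.integrable_comp_of_integrable hint).congr (.of_forall hsplit)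
  calc ∫ x, g x x ∂Measure.pi μ
      = ∫ z, g (T.piecewise z.1 z.2) (T.piecewise z.1 z.2) ∂(Measure.pi μ).prod (Measure.pi μ) := by
        rw [← hpres.map_eq] at hint
        rw [← hpres.map_eq, integral_map hpres.aemeasurable hint.aestronglyMeasurable, hpres.map_eq]
    _ = ∫ z, g z.1 z.2 ∂(Measure.pi μ).prod (Measure.pi μ) := by simp only [hsplit]
    _ = ∫ x, ∫ y, g x y ∂Measure.pi μ ∂Measure.pi μ := integral_prod _ hint'

end Resampling

/-- One step of the greedy algorithm in the graph with edge indicators `ω`: the set chosen so far is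
`I`, and `v` is the vertex being processed. -/
def greedyStep {V : Type*} [DecidableEq V] (ω : Sym2 V → Bool) (I : Finset V) (v : V) : Finset V :=
  if ∀ u ∈ I, ω s(u, v) = false then insert v I else I

namespace greedyStep

variable {V : Type*} [DecidableEq V] {ω ω' : Sym2 V → Bool} {I : Finset V} {v : V}

theorem eq_insert (h : ∀ u ∈ I, ω s(u, v) = false) : greedyStep ω I v = insert v I := if_pos h

theorem eq_self (h : ¬∀ u ∈ I, ω s(u, v) = false) : greedyStep ω I v = I := if_neg h

theorem subset_insert : greedyStep ω I v ⊆ insert v I := by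
  rw [greedyStep]
  split_ifs
  exacts [subset_rfl, Finset.subset_insert v I]

theorem congr (h : ∀ u ∈ I, ω s(u, v) = ω' s(u, v)) : greedyStep ω I v = greedyStep ω' I v :=
  if_congr (forall₂_congr fun u hu => by rw [h u hu]) rfl rfl

end greedyStep

/-- The greedy independent set obtained by processing the vertices of an arbitrary list in order,
in the graph with edge indicators `ω`. Prefixes of `List.finRange n` give the intermediate states of
`greedyIndepSet`. -/
def greedyAlong {V : Type*} [DecidableEq V] (ω : Sym2 V → Bool) (l : List V) : Finset V :=
  l.foldl (greedyStep ω) ∅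

theorem greedyIndepSet_eq_greedyAlong (n : ℕ) (ω : Sym2 (Fin n) → Bool) :
    greedyIndepSet n ω = greedyAlong ω (List.finRange n) := by
  simp only [greedyIndepSet, greedyAlong, funext₂ fun I v => greedyStep.eq_1 ω I v]
  congr!

namespace greedyAlong

variable {V : Type*} [DecidableEq V]

@[simp]
theorem nil (ω : Sym2 V → Bool) : greedyAlong ω [] = ∅ := rfl

theorem append_singleton (ω : Sym2 V → Bool) (l : List V) (v : V) :
    greedyAlong ω (l ++ [v]) = greedyStep ω (greedyAlong ω l) v :=
  List.foldl_append

theorem mem_of_mem {ω : Sym2 V → Bool} {l : List V} {u : V} (hu : u ∈ greedyAlong ω l) :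
    u ∈ l := by
  induction l using List.reverseRecOn with
  | nil => simp at hu
  | append_singleton l v ih =>
    rw [append_singleton] at hu
    rcases Finset.mem_insert.1 (greedyStep.subset_insert hu) with rfl | hu
    · exact List.mem_append_right l (List.mem_singleton_self u)
    · exact List.mem_append_left [v] (ih hu)

theorem dependsOn (l : List V) :
    DependsOn (fun ω : Sym2 V → Bool => greedyAlong ω l) {e | ∀ u ∈ e, u ∈ l} := by
  intro ω ω' h
  induction l using List.reverseRecOn with
  | nil => rfl
  | append_singleton l v ih =>
    have hl : greedyAlong ω l = greedyAlong ω' l :=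
      ih fun e he => h e fun u hu => List.mem_append_left _ (he u hu)
    simp only [append_singleton, hl]
    exact greedyStep.congr fun u hu => h _ (by simp [mem_of_mem hu])

end greedyAlong

theorem isProbabilityMeasure_bernoulliMeasure_s7 {p : ℝ} (hp₀ : 0 ≤ p) (hp₁ : p ≤ 1) :
    IsProbabilityMeasure (bernoulliMeasure p) :=
  ⟨by simp [bernoulliMeasure, ← ENNReal.ofReal_add hp₀ (sub_nonneg.2 hp₁)]⟩

namespace erdosRenyi

variable {p : ℝ} (hp₀ : 0 ≤ p)

include hp₀

theorem isProbabilityMeasure (hp₁ : p ≤ 1) (n : ℕ) : IsProbabilityMeasure (erdosRenyi n p) := by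
  have := isProbabilityMeasure_bernoulliMeasure_s7 hp₀ hp₁
  unfold erdosRenyi
  infer_instance

variable {n : ℕ}

theorem measureReal_forall_eq_false (hp₁ : p ≤ 1) (S : Finset (Sym2 (Fin n))) :
    (erdosRenyi n p).real {ω | ∀ e ∈ S, ω e = false} = (1 - p) ^ S.card := by
  have := isProbabilityMeasure_bernoulliMeasure_s7 hp₀ hp₁
  have hpi : {ω : Sym2 (Fin n) → Bool | ∀ e ∈ S, ω e = false} =
      (S : Set _).pi fun _ => {false} := by
    ext ω
    simp
  have hfalse : bernoulliMeasure p {false} = ENNReal.ofReal (1 - p) := by simp [bernoulliMeasure]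
  rw [measureReal_def, hpi, erdosRenyi, Measure.pi_pi_finset, Finset.prod_const, hfalse,
    ENNReal.toReal_pow, ENNReal.toReal_ofReal (sub_nonneg.2 hp₁)]

theorem measureReal_forall_not_adj (hp₁ : p ≤ 1) (S : Finset (Fin n)) (v : Fin n) :
    (erdosRenyi n p).real {ω | ∀ u ∈ S, ω s(u, v) = false} = (1 - p) ^ S.card := by
  have hinj : Function.Injective fun u : Fin n => s(u, v) := fun _ _ => Sym2.congr_left.1
  simpa [Finset.card_image_of_injective S hinj] using
    measureReal_forall_eq_false hp₀ hp₁ (S.image fun u => s(u, v))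

section Transition

variable {E : Type*} [NormedAddCommGroup E] [NormedSpace ℝ E] [CompleteSpace E]

theorem integral_greedyStep (hp₁ : p ≤ 1) (S : Finset (Fin n)) (v : Fin n)
    (f : Finset (Fin n) → E) :
    ∫ ω, f (greedyStep ω S v) ∂erdosRenyi n p =
      (1 - p) ^ S.card • f (insert v S) + (1 - (1 - p) ^ S.card) • f S := by
  classical
  have := isProbabilityMeasure hp₀ hp₁ n
  have hS : MeasurableSet {ω : Sym2 (Fin n) → Bool | ∀ u ∈ S, ω s(u, v) = false} :=
    (Set.toFinite _).measurableSet
  have hpiece (ω : Sym2 (Fin n) → Bool) : f (greedyStep ω S v) =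
      {ω | ∀ u ∈ S, ω s(u, v) = false}.piecewise (fun _ => f (insert v S)) (fun _ => f S) ω := by
    by_cases h : ω ∈ {ω : Sym2 (Fin n) → Bool | ∀ u ∈ S, ω s(u, v) = false}
    · rw [Set.piecewise_eq_of_mem _ _ _ h, greedyStep.eq_insert h]
    · rw [Set.piecewise_eq_of_notMem _ _ _ h, greedyStep.eq_self h]
  simp only [hpiece]
  rw [integral_piecewise hS Integrable.of_finite.integrableOn Integrable.of_finite.integrableOn,
    setIntegral_const, setIntegral_const, probReal_compl_eq_one_sub hS,
    measureReal_forall_not_adj hp₀ hp₁]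

theorem integral_greedyAlong_append_singleton (hp₁ : p ≤ 1) {l : List (Fin n)} {v : Fin n}
    (hv : v ∉ l) (f : Finset (Fin n) → E) :
    ∫ ω, f (greedyAlong ω (l ++ [v])) ∂erdosRenyi n p =
      ∫ ω, ((1 - p) ^ (greedyAlong ω l).card • f (insert v (greedyAlong ω l)) +
        (1 - (1 - p) ^ (greedyAlong ω l).card) • f (greedyAlong ω l)) ∂erdosRenyi n p := by
  have := isProbabilityMeasure_bernoulliMeasure_s7 hp₀ hp₁
  have := isProbabilityMeasure hp₀ hp₁ n
  let g (ω ω' : Sym2 (Fin n) → Bool) : E := f (greedyStep ω' (greedyAlong ω l) v)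
  have hleft (ω') : DependsOn (fun ω => g ω ω') {e | v ∉ e} := fun ω₁ ω₂ h => by
    have hl : greedyAlong ω₁ l = greedyAlong ω₂ l :=
      greedyAlong.dependsOn l fun e he => h e fun hve => hv (he v hve)
    simp only [g, hl]
  have hright (ω) : DependsOn (g ω) {e | v ∉ e}ᶜ := fun ω₁ ω₂ h =>
    congrArg f (greedyStep.congr fun u _ => h _ (by simp))
  calc ∫ ω, f (greedyAlong ω (l ++ [v])) ∂erdosRenyi n p
      = ∫ ω, g ω ω ∂erdosRenyi n p := by simp only [g, greedyAlong.append_singleton]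
    _ = ∫ ω, ∫ ω', g ω ω' ∂erdosRenyi n p ∂erdosRenyi n p :=
      integral_pi_eq_integral_integral_of_dependsOn _ .of_finite hleft hright
    _ = _ := by simp only [g, integral_greedyStep hp₀ hp₁]

end Transition

theorem integral_pow_card_append_singleton (hp₁ : p ≤ 1) {l : List (Fin n)} {v : Fin n}
    (hv : v ∉ l) (r : ℝ) :
    ∫ ω, r ^ (greedyAlong ω (l ++ [v])).card ∂erdosRenyi n p =
      ∫ ω, r ^ (greedyAlong ω l).card ∂erdosRenyi n p +
        (r - 1) * ∫ ω, (r * (1 - p)) ^ (greedyAlong ω l).card ∂erdosRenyi n p := by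
  have := isProbabilityMeasure hp₀ hp₁ n
  rw [integral_greedyAlong_append_singleton hp₀ hp₁ hv fun S => r ^ S.card, ← integral_const_mul,
    ← integral_add .of_finite .of_finite]
  refine integral_congr_ae (.of_forall fun ω => ?_)
  have hvω : v ∉ greedyAlong ω l := fun h => hv (greedyAlong.mem_of_mem h)
  simp only [Finset.card_insert_of_notMem hvω, smul_eq_mul, mul_pow, pow_succ]
  ring

theorem integral_inv_pow_card (hp₁ : p < 1) {l : List (Fin n)} (hl : l.Nodup) :
    ∫ ω, (1 - p)⁻¹ ^ (greedyAlong ω l).card ∂erdosRenyi n p = 1 + l.length * (p / (1 - p)) := by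
  have := isProbabilityMeasure hp₀ hp₁.le n
  have hq : 1 - p ≠ 0 := (sub_pos.2 hp₁).ne'
  induction l using List.reverseRecOn with
  | nil => simp
  | append_singleton l v ih =>
    obtain ⟨hv, hl⟩ : v ∉ l ∧ l.Nodup := List.nodup_cons.1 (List.nodup_append_comm.1 hl)
    rw [integral_pow_card_append_singleton hp₀ hp₁.le hv, inv_mul_cancel₀ hq, ih hl]
    simp only [one_pow, integral_const, probReal_univ, smul_eq_mul, List.length_append,
      List.length_singleton, Nat.cast_add, Nat.cast_one]
    field_simp
    ring

theorem integral_inv_sq_pow_card (hp₁ : p < 1) {l : List (Fin n)} (hl : l.Nodup) :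
    ∫ ω, ((1 - p)⁻¹ ^ 2) ^ (greedyAlong ω l).card ∂erdosRenyi n p =
      (1 + l.length * (p / (1 - p))) ^ 2 + l.length.choose 2 * (p / (1 - p)) ^ 3 := by
  have := isProbabilityMeasure hp₀ hp₁.le n
  have hq : 1 - p ≠ 0 := (sub_pos.2 hp₁).ne'
  induction l using List.reverseRecOn with
  | nil => simp
  | append_singleton l v ih =>
    obtain ⟨hv, hl⟩ : v ∉ l ∧ l.Nodup := List.nodup_cons.1 (List.nodup_append_comm.1 hl)
    have hpow : (1 - p)⁻¹ ^ 2 * (1 - p) = (1 - p)⁻¹ := by field_simp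
    rw [integral_pow_card_append_singleton hp₀ hp₁.le hv, hpow, ih hl,
      integral_inv_pow_card hp₀ hp₁ hl, List.length_append, List.length_singleton,
      Nat.choose_succ_succ' _ 1, Nat.choose_one_right]
    push_cast
    field_simp
    ring

theorem variance_inv_pow_card (hp₁ : p < 1) {l : List (Fin n)} (hl : l.Nodup) :
    ProbabilityTheory.variance (fun ω => (1 - p)⁻¹ ^ (greedyAlong ω l).card) (erdosRenyi n p) =
      l.length.choose 2 * (p / (1 - p)) ^ 3 := by
  have := isProbabilityMeasure hp₀ hp₁.le n
  rw [ProbabilityTheory.variance_eq_sub .of_discrete, integral_inv_pow_card hp₀ hp₁ hl]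
  simp only [Pi.pow_apply, pow_right_comm _ _ 2, integral_inv_sq_pow_card hp₀ hp₁ hl]
  ring

theorem measure_card_greedyAlong_lt_le (hp₁ : p < 1) {l : List (Fin n)} (hl : l.Nodup) {x δ : ℝ}
    (hδ : 0 < δ) (hx : Real.exp (p / (1 - p) * x) + δ ≤ 1 + l.length * (p / (1 - p))) :
    erdosRenyi n p {ω | ((greedyAlong ω l).card : ℝ) < x} ≤
      ENNReal.ofReal (l.length.choose 2 * (p / (1 - p)) ^ 3 / δ ^ 2) := by
  have := isProbabilityMeasure hp₀ hp₁.le n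
  have hq : 0 < 1 - p := sub_pos.2 hp₁
  have hinv : (1 - p)⁻¹ ≤ Real.exp (p / (1 - p)) := by
    convert! Real.add_one_le_exp (p / (1 - p)) using 1
    field_simp
    ring
  have hpow {k : ℕ} (hk : (k : ℝ) < x) : (1 - p)⁻¹ ^ k ≤ Real.exp (p / (1 - p) * x) :=
    calc (1 - p)⁻¹ ^ k ≤ Real.exp (p / (1 - p)) ^ k := by gcongr
      _ = Real.exp (p / (1 - p) * k) := by rw [← Real.exp_nat_mul, mul_comm]
      _ ≤ Real.exp (p / (1 - p) * x) := by gcongr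
  have hcheb := ProbabilityTheory.meas_ge_le_variance_div_sq (μ := erdosRenyi n p)
    (X := fun ω => (1 - p)⁻¹ ^ (greedyAlong ω l).card) .of_discrete hδ
  rw [variance_inv_pow_card hp₀ hp₁ hl, integral_inv_pow_card hp₀ hp₁ hl] at hcheb
  refine (measure_mono fun ω hω => ?_).trans hcheb
  have hlow := hpow hω
  rw [Set.mem_ofPred_eq, le_abs]
  right
  linarith

end erdosRenyi

section Asymptotics

variable (d : ℝ)

theorem tendsto_natCast_mul_odds :
    Tendsto (fun n : ℕ => n * (d / n / (1 - d / n))) atTop (𝓝 d) := by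
  have hlim : Tendsto (fun n : ℕ => d / (1 - d / n)) atTop (𝓝 (d / (1 - 0))) :=
    tendsto_const_nhds.div (tendsto_const_nhds.sub (tendsto_const_div_atTop_nhds_zero_nat d))
      (by norm_num)
  rw [sub_zero, div_one] at hlim
  refine hlim.congr' ?_
  filter_upwards [eventually_ne_atTop 0] with n hn
  have hn' : (n : ℝ) ≠ 0 := Nat.cast_ne_zero.2 hn
  rw [← mul_div_assoc, mul_div_cancel₀ _ hn']

theorem tendsto_choose_two_mul_odds_pow_three :
    Tendsto (fun n : ℕ => n.choose 2 * (d / n / (1 - d / n)) ^ 3) atTop (𝓝 0) := by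
  have hinv := tendsto_inv_atTop_nhds_zero_nat (𝕜 := ℝ)
  have hlim : Tendsto (fun n : ℕ => (n * (d / n / (1 - d / n))) ^ 3 *
      (((n : ℝ)⁻¹ - (n : ℝ)⁻¹ ^ 2) / 2)) atTop (𝓝 0) := by
    simpa using ((tendsto_natCast_mul_odds d).pow 3).mul ((hinv.sub (hinv.pow 2)).div_const 2)
  refine hlim.congr' ?_
  filter_upwards [eventually_ne_atTop 0] with n hn
  have hn' : (n : ℝ) ≠ 0 := Nat.cast_ne_zero.2 hn
  rw [Nat.cast_choose_two, mul_pow]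
  field_simp

end Asymptotics

theorem tendsto_erdosRenyi_card_greedyIndepSet_lt {d c : ℝ} (hd : 0 < d)
    (hc : c < Real.log (1 + d) / d) :
    Tendsto (fun n : ℕ => erdosRenyi n (d / n) {ω | ((greedyIndepSet n ω).card : ℝ) < c * n})
      atTop (𝓝 0) := by
  have hexp : Real.exp (d * c) < 1 + d := by
    rwa [← Real.lt_log_iff_exp_lt (by positivity), mul_comm, ← lt_div_iff₀ hd]
  obtain ⟨δ, hδ, hgap⟩ : ∃ δ > 0, Real.exp (d * c) + δ < 1 + d :=
    ⟨(1 + d - Real.exp (d * c)) / 2, by linarith, by linarith⟩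
  have hodds := tendsto_natCast_mul_odds d
  have hgap_ev : ∀ᶠ n : ℕ in atTop, Real.exp (n * (d / n / (1 - d / n)) * c) + δ <
      1 + n * (d / n / (1 - d / n)) :=
    (((hodds.mul_const c).rexp).add_const δ).eventually_lt (hodds.const_add 1) hgap
  have hbound : Tendsto
      (fun n : ℕ => ENNReal.ofReal (n.choose 2 * (d / n / (1 - d / n)) ^ 3 / δ ^ 2))
      atTop (𝓝 0) := by
    simpa using ENNReal.tendsto_ofReal
      ((tendsto_choose_two_mul_odds_pow_three d).div_const (δ ^ 2))
  refine tendsto_of_tendsto_of_tendsto_of_le_of_le' tendsto_const_nhds hbound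
    (.of_forall fun _ => zero_le) ?_
  filter_upwards [hgap_ev, tendsto_natCast_atTop_atTop.eventually_gt_atTop d] with n hgap_n hn
  have hp₁ : d / n < 1 := (div_lt_one (hd.trans hn)).2 hn
  have hle := erdosRenyi.measure_card_greedyAlong_lt_le (by positivity) hp₁ (List.nodup_finRange n)
    (x := c * n) hδ (by
      rw [List.length_finRange]
      exact (by ring_nf : _ = _).trans_le hgap_n.le)
  simpa only [greedyIndepSet_eq_greedyAlong, List.length_finRange] using hle

theorem greedy_independent_set_half_optimal_general {d c : ℝ} (hd : 0 < d)
    (hc : c < Real.log (1 + d) / d) :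
    Tendsto
      (fun n : ℕ => erdosRenyi n (d / n) {ω | c * n ≤ ((greedyIndepSet n ω).card : ℝ)})
      atTop (𝓝 1) := by
  have hcompl : Tendsto (fun n : ℕ => 1 - erdosRenyi n (d / n)
      {ω | ((greedyIndepSet n ω).card : ℝ) < c * n}) atTop (𝓝 (1 - 0)) :=
    ENNReal.Tendsto.sub tendsto_const_nhds (tendsto_erdosRenyi_card_greedyIndepSet_lt hd hc)
      (.inl ENNReal.one_ne_top)
  rw [tsub_zero] at hcompl
  refine hcompl.congr' ?_
  filter_upwards [tendsto_natCast_atTop_atTop.eventually_ge_atTop d] with n hn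
  have := erdosRenyi.isProbabilityMeasure (p := d / n) (by positivity)
    (div_le_one_of_le₀ hn n.cast_nonneg) n
  rw [← prob_compl_eq_one_sub (Set.toFinite _).measurableSet]
  simp only [Set.compl_ofPred, not_lt]

theorem one_sub_mul_log_div_lt {ε d : ℝ} (hε : 0 ≤ ε) (hd : 1 ≤ d) :
    (1 - ε) * (Real.log d / d) < Real.log (1 + d) / d := by
  have hd₀ : 0 < d := by linarith
  calc (1 - ε) * (Real.log d / d) ≤ 1 * (Real.log d / d) := by
        gcongr
        · exact div_nonneg (Real.log_nonneg hd) hd₀.le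
        · linarith
    _ = Real.log d / d := one_mul _
    _ < Real.log (1 + d) / d := by
        gcongr
        linarith

/-- for every `ε > 0` there is `d₀` such that for every `d ≥ d₀`, whp
as `n → ∞` the greedy algorithm applied to `G(n,d/n)` produces an independent set
of size at least `(1-ε)·(log d/d)·n` (roughly half optimal). -/
theorem greedy_independent_set_half_optimal (ε : ℝ) (hε : 0 < ε) :
    ∃ d₀ : ℝ, ∀ d : ℝ, d₀ ≤ d →
      Tendsto
        (fun n : ℕ =>
          erdosRenyi n (d / n)
            {ω | (1 - ε) * (Real.log d / d) * n ≤ ((greedyIndepSet n ω).card : ℝ)})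
        atTop (𝓝 1) :=
  ⟨1, fun _ hd => greedy_independent_set_half_optimal_general (zero_lt_one.trans_le hd)
    (one_sub_mul_log_div_lt hε.le hd)⟩
end
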